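/- Let γ ∈ (π/2, π] and C > 0 satisfy 2·C·cos(γ/2) + cos γ > 0 (equivalently F′(0) < 0). Then the dimensionless total force F has exactly two critical points in (0, π): there exist φ₁ ∈ (0, π/4) and φ₂ ∈ (π/2, π) with F′(φ₁) = F′(φ₂) = 0, and F′(φ) < 0 for φ ∈ [0, φ₁), F′(φ) > 0 for φ ∈ (φ₁, φ₂), and F′(φ) < 0 for φ ∈ (φ₂, π]. -/

import Mathlib

/-! `F′` increases strictly on `[0, π/4]`, is positive on `[π/4, π/2]` and decreases strictly on
`[π/2, π]`; being negative at `0` and at `π`, it vanishes once in each outer interval. The signs of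
`F′` and `F″` can be read off term by term, except for `F″` on `[0, π/4]` when `φ + γ > π`. But
then `γ > 3π/4`, where `F′(0) < 0` forces `C > cos (π/8)`, and the `C ^ 2` term outweighs the
negative one. -/

open Real Set

section Crossing

variable {α β : Type*} [ConditionallyCompleteLinearOrder α] [TopologicalSpace α] [OrderTopology α]
  [DenselyOrdered α] [LinearOrder β] [TopologicalSpace β] [OrderClosedTopology β]
  {f : α → β} {a b c d : α} {y : β}

lemma exists_crossing_of_strictMonoOn (hab : a ≤ b) (hf : ContinuousOn f (Icc a b))
    (hmono : StrictMonoOn f (Icc a b)) (ha : f a < y) (hb : y < f b) :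
    ∃ x ∈ Ioo a b, f x = y ∧ (∀ z ∈ Ico a x, f z < y) ∧ ∀ z ∈ Ioc x b, y < f z := by
  obtain ⟨x, hx, rfl⟩ := intermediate_value_Ioo hab hf ⟨ha, hb⟩
  have hx' := Ioo_subset_Icc_self hx
  exact ⟨x, hx, rfl, fun z hz => hmono ⟨hz.1, hz.2.le.trans hx'.2⟩ hx' hz.2,
    fun z hz => hmono hx' ⟨hx'.1.trans hz.1.le, hz.2⟩ hz.1⟩

lemma exists_crossing_of_strictAntiOn (hab : a ≤ b) (hf : ContinuousOn f (Icc a b))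
    (hanti : StrictAntiOn f (Icc a b)) (ha : y < f a) (hb : f b < y) :
    ∃ x ∈ Ioo a b, f x = y ∧ (∀ z ∈ Ico a x, y < f z) ∧ ∀ z ∈ Ioc x b, f z < y :=
  exists_crossing_of_strictMonoOn (β := βᵒᵈ) hab hf hanti.dual_right ha hb

lemma exists_two_crossings (hab : a ≤ b) (hbc : b ≤ c) (hcd : c ≤ d)
    (hf : ContinuousOn f (Icc a d)) (hmono : StrictMonoOn f (Icc a b))
    (hanti : StrictAntiOn f (Icc c d)) (ha : f a < y) (hmid : ∀ x ∈ Icc b c, y < f x)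
    (hd : f d < y) :
    ∃ x₁ ∈ Ioo a b, ∃ x₂ ∈ Ioo c d, f x₁ = y ∧ f x₂ = y ∧
      (∀ x ∈ Ico a x₁, f x < y) ∧ (∀ x ∈ Ioo x₁ x₂, y < f x) ∧ ∀ x ∈ Ioc x₂ d, f x < y := by
  obtain ⟨x₁, hx₁, hfx₁, hbefore, hafter₁⟩ := exists_crossing_of_strictMonoOn hab
    (hf.mono (Icc_subset_Icc_right (hbc.trans hcd))) hmono ha (hmid b ⟨le_rfl, hbc⟩)
  obtain ⟨x₂, hx₂, hfx₂, hbefore₂, hafter⟩ := exists_crossing_of_strictAntiOn hcd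
    (hf.mono (Icc_subset_Icc_left (hab.trans hbc))) hanti (hmid c ⟨hbc, le_rfl⟩) hd
  refine ⟨x₁, hx₁, x₂, hx₂, hfx₁, hfx₂, hbefore, fun x hx => ?_, hafter⟩
  rcases le_total x b with hxb | hbx
  · exact hafter₁ x ⟨hx.1, hxb⟩
  rcases le_total x c with hxc | hcx
  · exact hmid x ⟨hbx, hxc⟩
  · exact hbefore₂ x ⟨hcx, hx.2⟩

end Crossing

lemma cos_le_sin_of_pi_div_four_le {x : ℝ} (h₁ : π / 4 ≤ x) (h₂ : x ≤ π) : cos x ≤ sin x := by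
  rw [← cos_sub_pi_div_two, ← cos_abs (x - π / 2)]
  exact cos_le_cos_of_nonneg_of_le_pi (abs_nonneg _) h₂ (abs_le.2 ⟨by linarith, by linarith⟩)

lemma sin_le_cos_of_le_pi_div_four {x : ℝ} (h₁ : -(π / 2) ≤ x) (h₂ : x ≤ π / 4) :
    sin x ≤ cos x := by
  have hreflect : cos (π / 2 - x) ≤ sin (π / 2 - x) :=
    cos_le_sin_of_pi_div_four_le (by linarith) (by linarith)
  rwa [cos_pi_div_two_sub, sin_pi_div_two_sub] at hreflect

lemma two_mul_cos_le_sin {x : ℝ} (h₁ : 3 * π / 8 ≤ x) (h₂ : x ≤ π) : 2 * cos x ≤ sin x := by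
  have hsin : 0 ≤ sin x := sin_nonneg_of_nonneg_of_le_pi (by linarith [pi_pos]) h₂
  rcases le_total (π / 2) x with hx | hx
  · linarith [cos_nonpos_of_pi_div_two_le_of_le hx (by linarith)]
  have hcos_two : cos (2 * x) ≤ -(√2 / 2) := by
    rw [← cos_pi_div_four, ← cos_pi_sub]
    exact cos_le_cos_of_nonneg_of_le_pi (by linarith [pi_pos]) (by linarith) (by linarith)
  have hsqrt : 1.2 ≤ √2 := le_sqrt_of_sq_le (by norm_num)
  refine le_of_sq_le_sq ?_ hsin
  rw [mul_pow, cos_sq, sin_sq_eq_half_sub]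
  linarith

/-- The dimensionless total force `F`. -/
noncomputable def totalForce (γ A C φ : ℝ) : ℝ :=
  -A * C ^ 2 - 2 * sin (φ + γ) - 4 * C * cos ((φ + γ) / 2) * sin φ
    - (1 / 2) * C ^ 2 * sin (2 * φ) + C ^ 2 * φ

/-- The derivative `F′` of the total force, which does not involve `A`; its `C ^ 2` terms are
collected into a square. -/
noncomputable def totalForceDeriv (γ C φ : ℝ) : ℝ :=
  -2 * cos (φ + γ) + 2 * C * (sin ((φ + γ) / 2) * sin φ - 2 * cos ((φ + γ) / 2) * cos φ)
    + 2 * C ^ 2 * sin φ ^ 2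

/-- The second derivative `F″` of the total force, grouped by powers of `C`. -/
noncomputable def totalForceDerivTwo (γ C φ : ℝ) : ℝ :=
  2 * sin (φ + γ) + C * (5 * cos ((φ + γ) / 2) * sin φ + 4 * sin ((φ + γ) / 2) * cos φ)
    + 4 * C ^ 2 * sin φ * cos φ

section TotalForce

variable {γ C φ : ℝ}

lemma hasDerivAt_totalForce (γ A C φ : ℝ) :
    HasDerivAt (totalForce γ A C) (totalForceDeriv γ C φ) φ := by
  have hadd : HasDerivAt (fun φ : ℝ => φ + γ) 1 φ := (hasDerivAt_id φ).add_const γ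
  have hmul : HasDerivAt (fun φ : ℝ => 2 * φ) (2 * 1) φ := (hasDerivAt_id φ).const_mul 2
  refine HasDerivAt.congr_deriv (((((hadd.sin.const_mul 2).const_sub (-A * C ^ 2)).sub
    (((hadd.div_const 2).cos.const_mul (4 * C)).mul (hasDerivAt_sin φ))).sub
    (hmul.sin.const_mul ((1 / 2) * C ^ 2))).add ((hasDerivAt_id φ).const_mul (C ^ 2))) ?_
  rw [totalForceDeriv, sin_sq_eq_half_sub]
  ring

lemma deriv_totalForce (γ A C : ℝ) : deriv (totalForce γ A C) = totalForceDeriv γ C :=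
  funext fun φ => (hasDerivAt_totalForce γ A C φ).deriv

lemma hasDerivAt_totalForceDeriv (γ C φ : ℝ) :
    HasDerivAt (totalForceDeriv γ C) (totalForceDerivTwo γ C φ) φ := by
  have hadd : HasDerivAt (fun φ : ℝ => φ + γ) 1 φ := (hasDerivAt_id φ).add_const γ
  have hhalf := hadd.div_const 2
  refine HasDerivAt.congr_deriv (((hadd.cos.const_mul (-2)).add
    (((hhalf.sin.mul (hasDerivAt_sin φ)).sub
      ((hhalf.cos.const_mul 2).mul (hasDerivAt_cos φ))).const_mul (2 * C))).add
    (((hasDerivAt_sin φ).pow 2).const_mul (2 * C ^ 2))) ?_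
  rw [totalForceDerivTwo]
  ring

lemma continuous_totalForceDeriv (γ C : ℝ) : Continuous (totalForceDeriv γ C) := by
  unfold totalForceDeriv
  fun_prop

lemma totalForceDeriv_zero (γ C : ℝ) :
    totalForceDeriv γ C 0 = -2 * (2 * C * cos (γ / 2) + cos γ) := by
  simp only [totalForceDeriv, zero_add, sin_zero, cos_zero]
  ring

lemma totalForceDeriv_pi (γ C : ℝ) :
    totalForceDeriv γ C π = 2 * cos γ - 4 * C * sin (γ / 2) := by
  have hhalf : cos ((π + γ) / 2) = -sin (γ / 2) := by
    rw [← cos_add_pi_div_two, add_div, add_comm]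
  rw [totalForceDeriv, hhalf, add_comm π γ, cos_add_pi, sin_pi, cos_pi]
  ring

lemma totalForceDeriv_pi_neg (hγ : γ ∈ Icc (π / 2) π) (hC : 0 < C) :
    totalForceDeriv γ C π < 0 := by
  obtain ⟨hγ₁, hγ₂⟩ := hγ
  have hcos : cos γ ≤ 0 := cos_nonpos_of_pi_div_two_le_of_le hγ₁ (by linarith [pi_pos])
  have hsin : 0 < sin (γ / 2) :=
    sin_pos_of_pos_of_lt_pi (by linarith [pi_pos]) (by linarith [pi_pos])
  rw [totalForceDeriv_pi]
  linarith [mul_pos hC hsin]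

lemma totalForceDeriv_pos (hγ : γ ∈ Icc (π / 2) π) (hC : 0 < C)
    (hφ : φ ∈ Icc (π / 4) (π / 2)) : 0 < totalForceDeriv γ C φ := by
  obtain ⟨hγ₁, hγ₂⟩ := hγ
  obtain ⟨hφ₁, hφ₂⟩ := hφ
  have hcos : 0 ≤ cos φ := cos_nonneg_of_neg_pi_div_two_le_of_le (by linarith) hφ₂
  have hsin : 0 < sin φ :=
    sin_pos_of_pos_of_lt_pi (by linarith [pi_pos]) (by linarith [pi_pos])
  have hsin_half : 0 ≤ sin ((φ + γ) / 2) :=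
    sin_nonneg_of_nonneg_of_le_pi (by linarith) (by linarith)
  have hcos_add : cos (φ + γ) ≤ 0 :=
    cos_nonpos_of_pi_div_two_le_of_le (by linarith) (by linarith)
  have hlinear : 2 * cos ((φ + γ) / 2) * cos φ ≤ sin ((φ + γ) / 2) * sin φ :=
    mul_le_mul (two_mul_cos_le_sin (by linarith) (by linarith))
      (cos_le_sin_of_pi_div_four_le hφ₁ (by linarith)) hcos hsin_half
  have hCterm := mul_nonneg hC.le (sub_nonneg.2 hlinear)
  have hsquare : 0 < C ^ 2 * sin φ ^ 2 := by positivity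
  rw [totalForceDeriv]
  linarith

lemma totalForceDerivTwo_neg (hγ : γ ∈ Icc (π / 2) π) (hC : 0 < C)
    (hφ : φ ∈ Ioo (π / 2) π) : totalForceDerivTwo γ C φ < 0 := by
  obtain ⟨hγ₁, hγ₂⟩ := hγ
  obtain ⟨hφ₁, hφ₂⟩ := hφ
  have hsin : 0 < sin φ := sin_pos_of_pos_of_lt_pi (by linarith) hφ₂
  have hcos : cos φ < 0 := cos_neg_of_pi_div_two_lt_of_lt hφ₁ (by linarith)
  have hsin_half : 0 < sin ((φ + γ) / 2) :=
    sin_pos_of_pos_of_lt_pi (by linarith) (by linarith)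
  have hcos_half : cos ((φ + γ) / 2) < 0 :=
    cos_neg_of_pi_div_two_lt_of_lt (by linarith) (by linarith)
  have hsin_add : sin (φ + γ) < 0 := by
    rw [← neg_pos, ← sin_sub_pi]
    exact sin_pos_of_pos_of_lt_pi (by linarith) (by linarith)
  have hlinear : 5 * cos ((φ + γ) / 2) * sin φ + 4 * sin ((φ + γ) / 2) * cos φ < 0 := by
    linarith [mul_neg_of_neg_of_pos hcos_half hsin, mul_neg_of_pos_of_neg hsin_half hcos]
  have hCterm := mul_neg_of_pos_of_neg hC hlinear
  have hsquare : C ^ 2 * sin φ * cos φ < 0 := mul_neg_of_pos_of_neg (by positivity) hcos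
  rw [totalForceDerivTwo]
  linarith

lemma totalForceDerivTwo_pos_of_add_le_pi (hC : 0 < C) (hφ : φ ∈ Ioo 0 (π / 2)) (hγ : 0 ≤ γ)
    (hadd : φ + γ ≤ π) : 0 < totalForceDerivTwo γ C φ := by
  obtain ⟨hφ₁, hφ₂⟩ := hφ
  have hsin : 0 < sin φ := sin_pos_of_pos_of_lt_pi hφ₁ (by linarith)
  have hcos : 0 < cos φ := cos_pos_of_mem_Ioo ⟨by linarith, hφ₂⟩
  have hsin_add : 0 ≤ sin (φ + γ) := sin_nonneg_of_nonneg_of_le_pi (by linarith) hadd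
  have hsin_half : 0 ≤ sin ((φ + γ) / 2) :=
    sin_nonneg_of_nonneg_of_le_pi (by linarith) (by linarith)
  have hcos_half : 0 ≤ cos ((φ + γ) / 2) :=
    cos_nonneg_of_neg_pi_div_two_le_of_le (by linarith) (by linarith)
  rw [totalForceDerivTwo]
  positivity

lemma one_lt_two_mul_sq_mul_cos (hC : cos (π / 8) ≤ C) (hφ : φ ∈ Icc 0 (π / 4)) :
    1 < 2 * C ^ 2 * cos φ := by
  have hcos : √2 / 2 ≤ cos φ := by
    rw [← cos_pi_div_four]
    exact cos_le_cos_of_nonneg_of_le_pi hφ.1 (by linarith [pi_pos]) hφ.2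
  have hsq : 1 + √2 / 2 ≤ 2 * C ^ 2 := by
    have hcos_eight : 0 ≤ cos (π / 8) :=
      cos_nonneg_of_neg_pi_div_two_le_of_le (by linarith [pi_pos]) (by linarith [pi_pos])
    calc 1 + √2 / 2 = 2 * cos (π / 8) ^ 2 := by
          rw [cos_sq, ← cos_pi_div_four]; ring_nf
      _ ≤ 2 * C ^ 2 := by gcongr
  calc (1 : ℝ) < (1 + √2 / 2) * (√2 / 2) := by
        have hsqrt : 1 < √2 := one_lt_sqrt_two
        have hsqrt_sq : √2 * √2 = 2 := mul_self_sqrt zero_le_two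
        linarith
    _ ≤ 2 * C ^ 2 * cos φ := by gcongr

lemma totalForceDerivTwo_pos_of_pi_le_add (hC : cos (π / 8) ≤ C) (hφ : φ ∈ Ioc 0 (π / 4))
    (hγ : γ ≤ π) (hadd : π ≤ φ + γ) : 0 < totalForceDerivTwo γ C φ := by
  obtain ⟨hφ₁, hφ₂⟩ := hφ
  have hC_pos : 0 < C :=
    (cos_pos_of_mem_Ioo ⟨by linarith [pi_pos], by linarith [pi_pos]⟩).trans_le hC
  have hsin : 0 < sin φ := sin_pos_of_pos_of_lt_pi hφ₁ (by linarith)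
  have hsin_add : -sin φ ≤ sin (φ + γ) := by
    rw [neg_le, ← sin_sub_pi]
    exact sin_le_sin_of_le_of_le_pi_div_two (by linarith) (by linarith) (by linarith)
  have hlinear : 0 ≤ 5 * cos ((φ + γ) / 2) * sin φ + 4 * sin ((φ + γ) / 2) * cos φ := by
    have hratio : -2 * cos ((φ + γ) / 2) ≤ sin ((φ + γ) / 2) := by
      have hreflect : 2 * cos (π - (φ + γ) / 2) ≤ sin (π - (φ + γ) / 2) :=
        two_mul_cos_le_sin (by linarith) (by linarith)
      rw [cos_pi_sub, sin_pi_sub] at hreflect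
      linarith
    have hsin_half : 0 ≤ sin ((φ + γ) / 2) :=
      sin_nonneg_of_nonneg_of_le_pi (by linarith) (by linarith)
    have hprod : -2 * cos ((φ + γ) / 2) * sin φ ≤ sin ((φ + γ) / 2) * cos φ :=
      mul_le_mul hratio (sin_le_cos_of_le_pi_div_four (by linarith) hφ₂) hsin.le hsin_half
    have hcos : 0 ≤ cos φ := cos_nonneg_of_neg_pi_div_two_le_of_le (by linarith) (by linarith)
    linarith [mul_nonneg hsin_half hcos]
  have hsquare := mul_pos hsin (sub_pos.2 (one_lt_two_mul_sq_mul_cos hC ⟨hφ₁.le, hφ₂⟩))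
  rw [totalForceDerivTwo]
  linarith [mul_nonneg hC_pos.le hlinear]

lemma pos_of_two_mul_cos_half_add_cos_pos (hγ : γ ∈ Icc (π / 2) π)
    (hcond : 0 < 2 * C * cos (γ / 2) + cos γ) : 0 < C := by
  obtain ⟨hγ₁, hγ₂⟩ := hγ
  have hcos : cos γ ≤ 0 := cos_nonpos_of_pi_div_two_le_of_le hγ₁ (by linarith [pi_pos])
  have hcos_half : 0 ≤ cos (γ / 2) :=
    cos_nonneg_of_neg_pi_div_two_le_of_le (by linarith [pi_pos]) (by linarith)
  have hprod : 0 < C * cos (γ / 2) := by linarith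
  exact pos_of_mul_pos_left hprod hcos_half

lemma cos_pi_div_eight_lt_of_two_mul_cos_half_add_cos_pos (hγ : γ ∈ Icc (3 * π / 4) π)
    (hcond : 0 < 2 * C * cos (γ / 2) + cos γ) : cos (π / 8) < C := by
  obtain ⟨hγ₁, hγ₂⟩ := hγ
  have hC : 0 < C :=
    pos_of_two_mul_cos_half_add_cos_pos ⟨by linarith [pi_pos], hγ₂⟩ hcond
  have hsin_eight : 0 < sin (π / 8) :=
    sin_pos_of_pos_of_lt_pi (by linarith [pi_pos]) (by linarith [pi_pos])
  have hcos_half : cos (γ / 2) ≤ sin (π / 8) := by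
    rw [← cos_pi_div_two_sub]
    exact cos_le_cos_of_nonneg_of_le_pi (by linarith [pi_pos]) (by linarith) (by linarith)
  have hcos : cos (π / 4) ≤ -cos γ := by
    rw [← cos_pi_sub]
    exact cos_le_cos_of_nonneg_of_le_pi (by linarith) (by linarith [pi_pos]) (by linarith)
  have hprod : 2 * sin (π / 8) * cos (π / 8) < 2 * sin (π / 8) * C :=
    calc 2 * sin (π / 8) * cos (π / 8) = cos (π / 4) := by
          rw [← sin_two_mul, cos_pi_div_four, ← sin_pi_div_four]; ring_nf
      _ ≤ -cos γ := hcos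
      _ < 2 * C * cos (γ / 2) := by linarith
      _ ≤ 2 * C * sin (π / 8) := by gcongr
      _ = 2 * sin (π / 8) * C := by ring
  exact lt_of_mul_lt_mul_left hprod (by positivity)

lemma strictMonoOn_totalForceDeriv (hγ : γ ∈ Icc 0 π) (hC : 0 < C)
    (hcond : 0 < 2 * C * cos (γ / 2) + cos γ) :
    StrictMonoOn (totalForceDeriv γ C) (Icc 0 (π / 4)) := by
  refine strictMonoOn_of_hasDerivWithinAt_pos (convex_Icc _ _)
    (continuous_totalForceDeriv γ C).continuousOn
    (fun φ _ => (hasDerivAt_totalForceDeriv γ C φ).hasDerivWithinAt) fun φ hφ => ?_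
  rw [interior_Icc] at hφ
  obtain ⟨hφ₁, hφ₂⟩ := hφ
  rcases le_total (φ + γ) π with hadd | hadd
  · exact totalForceDerivTwo_pos_of_add_le_pi hC ⟨hφ₁, by linarith⟩ hγ.1 hadd
  · have hC_lower : cos (π / 8) < C :=
      cos_pi_div_eight_lt_of_two_mul_cos_half_add_cos_pos ⟨by linarith, hγ.2⟩ hcond
    exact totalForceDerivTwo_pos_of_pi_le_add hC_lower.le ⟨hφ₁, hφ₂.le⟩ hγ.2 hadd

lemma strictAntiOn_totalForceDeriv (hγ : γ ∈ Icc (π / 2) π) (hC : 0 < C) :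
    StrictAntiOn (totalForceDeriv γ C) (Icc (π / 2) π) := by
  refine strictAntiOn_of_hasDerivWithinAt_neg (convex_Icc _ _)
    (continuous_totalForceDeriv γ C).continuousOn
    (fun φ _ => (hasDerivAt_totalForceDeriv γ C φ).hasDerivWithinAt) fun φ hφ => ?_
  rw [interior_Icc] at hφ
  exact totalForceDerivTwo_neg hγ hC hφ

theorem total_force_two_critical_points_obtuse_general (A : ℝ) (hγ : γ ∈ Icc (π / 2) π)
    (hcond : 0 < 2 * C * cos (γ / 2) + cos γ) :
    ∃ φ₁ ∈ Ioo 0 (π / 4), ∃ φ₂ ∈ Ioo (π / 2) π,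
      deriv (totalForce γ A C) φ₁ = 0 ∧ deriv (totalForce γ A C) φ₂ = 0 ∧
      (∀ φ ∈ Ico 0 φ₁, deriv (totalForce γ A C) φ < 0) ∧
      (∀ φ ∈ Ioo φ₁ φ₂, 0 < deriv (totalForce γ A C) φ) ∧
      (∀ φ ∈ Ioc φ₂ π, deriv (totalForce γ A C) φ < 0) := by
  have hπ := pi_pos
  have hC : 0 < C := pos_of_two_mul_cos_half_add_cos_pos hγ hcond
  have hzero : totalForceDeriv γ C 0 < 0 := by rw [totalForceDeriv_zero]; linarith
  rw [deriv_totalForce]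
  exact exists_two_crossings (by linarith) (by linarith) (by linarith)
    (continuous_totalForceDeriv γ C).continuousOn
    (strictMonoOn_totalForceDeriv ⟨by linarith [hγ.1], hγ.2⟩ hC hcond)
    (strictAntiOn_totalForceDeriv hγ hC) hzero
    (fun φ hφ => totalForceDeriv_pos hγ hC hφ) (totalForceDeriv_pi_neg hγ hC)

end TotalForce

/-- For `γ ∈ (π/2, π]` and `C > 0` with `2·C·cos(γ/2) + cos γ > 0` (i.e. `F′(0) < 0`), the
dimensionless total force has exactly two critical points in `(0, π)`: one in `(0, π/4)` and
one in `(π/2, π)`, with `F′ < 0` before the first, `F′ > 0` between them, `F′ < 0` after. -/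
theorem total_force_two_critical_points_obtuse (γ A C : ℝ)
    (hγ : γ ∈ Set.Ioc (Real.pi / 2) Real.pi) (hA : 0 < A) (hC : 0 < C)
    (hcond : 0 < 2 * C * Real.cos (γ / 2) + Real.cos γ)
    (F : ℝ → ℝ)
    (hF : F = fun φ => -A * C ^ 2 - 2 * Real.sin (φ + γ)
      - 4 * C * Real.cos ((φ + γ) / 2) * Real.sin φ
      - (1 / 2) * C ^ 2 * Real.sin (2 * φ) + C ^ 2 * φ) :
    ∃ φ₁ ∈ Set.Ioo (0 : ℝ) (Real.pi / 4), ∃ φ₂ ∈ Set.Ioo (Real.pi / 2) Real.pi,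
      deriv F φ₁ = 0 ∧ deriv F φ₂ = 0 ∧
      (∀ φ ∈ Set.Ico (0 : ℝ) φ₁, deriv F φ < 0) ∧
      (∀ φ ∈ Set.Ioo φ₁ φ₂, 0 < deriv F φ) ∧
      (∀ φ ∈ Set.Ioc φ₂ Real.pi, deriv F φ < 0) := by
  subst hF
  exact total_force_two_critical_points_obtuse_general A ⟨hγ.1.le, hγ.2⟩ hcond
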